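/- arXiv:2408.15592 — 2 statements merged into one kernel-verified Lean document; each statement's English description precedes it below -/
import Mathlib

section
/- Let C be an [n,k] rank metric code with n ≥ k ≥ 1, and let r ∈ {0,1,…,k−1}. Then C is r-minimal if and only if d_{r+1}(C) ≥ mr + 1. -/
open Submodule Pointwise

/-- The coordinatewise inclusion of `F^n` into `E^n`. -/
noncomputable def fIncl (F E : Type*) [Field F] [Field E] [Algebra F E] (n : ℕ) :
    (Fin n → F) →ₗ[F] (Fin n → E) :=
  LinearMap.compLeft (Algebra.linearMap F E) (Fin n)

/-- The rank support `χ(A)` of `A ⊆ E^n`: the smallest `F`-subspace `U` of `F^n`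
such that `A` is contained in the `E`-span of (the image in `E^n` of) `U`. -/
noncomputable def rankSupport (F E : Type*) [Field F] [Field E] [Algebra F E] (n : ℕ)
    (A : Set (Fin n → E)) : Submodule F (Fin n → F) :=
  sInf {U : Submodule F (Fin n → F) |
    A ⊆ (Submodule.span E (fIncl F E n '' (U : Set (Fin n → F))) : Set (Fin n → E))}

/-- The rank support weight `wt(A) = dim_F χ(A)`. -/
noncomputable def wt (F E : Type*) [Field F] [Field E] [Algebra F E] (n : ℕ)
    (A : Set (Fin n → E)) : ℕ :=
  Module.finrank F (rankSupport F E n A)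

/-- `D` is rank minimal in `C`: any subcode `B ≤ C` of the same dimension with
`χ(B) ⊆ χ(D)` satisfies `χ(B) = χ(D)`. -/
def RankMinimal (F E : Type*) [Field F] [Field E] [Algebra F E] (n : ℕ)
    (C D : Submodule E (Fin n → E)) : Prop :=
  ∀ B : Submodule E (Fin n → E), B ≤ C → Module.finrank E B = Module.finrank E D →
    rankSupport F E n (B : Set (Fin n → E)) ≤ rankSupport F E n (D : Set (Fin n → E)) →
    rankSupport F E n (B : Set (Fin n → E)) = rankSupport F E n (D : Set (Fin n → E))

/-- `C` is `r`-minimal with respect to the rank metric. -/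
def IsRMinimal (F E : Type*) [Field F] [Field E] [Algebra F E] (n : ℕ)
    (C : Submodule E (Fin n → E)) (r : ℕ) : Prop :=
  ∀ D : Submodule E (Fin n → E), D ≤ C → Module.finrank E D = r → RankMinimal F E n C D

/-- The `r`-th generalized rank weight of a code `C ≤ E^n`. -/
noncomputable def grw (F E : Type*) [Field F] [Field E] [Algebra F E] (n : ℕ)
    (C : Submodule E (Fin n → E)) (r : ℕ) : ℕ :=
  sInf {w : ℕ | ∃ D : Submodule E (Fin n → E), D ≤ C ∧ Module.finrank E D = r ∧
    wt F E n (D : Set (Fin n → E)) = w}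

/-!
A subcode of dimension `r` has weight at most `mr`, because the `F`-coordinates of an `E`-basis span
its support. If `C` is not `r`-minimal, there are distinct `r`-dimensional subcodes `B`, `D` with
`χ(B) ⊆ χ(D)`, and then `B + D` contains an `(r+1)`-dimensional subcode supported in `χ(D)`, hence
of weight at most `mr`.

Conversely, let `D` have dimension `r + 1` and weight at most `mr`. The functionals on `F^n` extend
to a family `Φ` of `E`-linear forms on `D`, of `F`-dimension `wt(D)`, and the hyperplane `ker p` of
`D` loses support exactly when some nonzero multiple of `p` lies in `Φ`. A nonzero element of `Φ`
therefore gives a hyperplane of smaller support. As `dim_F D* = m(r+1) ≥ dim_F Φ + m`, there is also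
a line `E p` of `D*` meeting `Φ` trivially, i.e. a hyperplane of full support, and `C` is not
`r`-minimal. Such a `p` is one for which `E → D*/Φ, a ↦ a p` is injective. Every nonzero `a` gives a
surjection `D* → D*/Φ, p ↦ a p`, so over a finite field the kernels of these surjections are too
small to cover `D*`; over an infinite field, a map `a ↦ a p` of maximal rank must be injective,
since otherwise a perturbation of `p` would increase the rank.
-/

section LinearAlgebra

variable {K V M N X : Type*} [Field K] [AddCommGroup V] [Module K V] [AddCommGroup M] [Module K M]
  [AddCommGroup N] [Module K N] [AddCommGroup X] [Module K X]

theorem exists_le_finrank_eq (D : Submodule K V) {r : ℕ} (hr : r ≤ Module.finrank K D) :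
    ∃ B ≤ D, Module.finrank K B = r := by
  obtain ⟨f, hf⟩ := exists_linearIndependent_of_le_finrank hr
  have hf' : LinearIndependent K (D.subtype ∘ f) := hf.map' D.subtype D.ker_subtype
  refine ⟨span K (Set.range (D.subtype ∘ f)), ?_, ?_⟩
  · rw [span_le]
    rintro _ ⟨i, rfl⟩
    exact (f i).2
  · rw [finrank_span_eq_card hf', Fintype.card_fin]

theorem finrank_map_subtype_ker_add_one {D : Submodule K V} [FiniteDimensional K D]
    {p : Module.Dual K D} (hp : p ≠ 0) :
    Module.finrank K ((LinearMap.ker p).map D.subtype) + 1 = Module.finrank K D := by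
  rw [finrank_map_subtype_eq, Module.Dual.finrank_ker_add_one_of_ne_zero hp]

theorem ker_le_ker_iff_exists_smul_eq {p q : Module.Dual K V} :
    LinearMap.ker p ≤ LinearMap.ker q ↔ ∃ a : K, a • p = q := by
  constructor
  · intro h
    have hq : q ∈ span K (Set.range fun _ : Unit => p) :=
      mem_span_of_iInf_ker_le_ker (by rwa [iInf_const])
    rwa [Set.range_const, mem_span_singleton] at hq
  · rintro ⟨a, rfl⟩
    exact LinearMap.ker_le_ker_smul p a

theorem exists_ne_zero_injective_add_smul [Infinite K] [FiniteDimensional K M] {f : M →ₗ[K] N}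
    (hf : Function.Injective f) (g : M →ₗ[K] N) :
    ∃ t : K, t ≠ 0 ∧ Function.Injective (f + t • g) := by
  obtain ⟨L, hL⟩ := f.exists_leftInverse_of_injective (LinearMap.ker_eq_bot.2 hf)
  obtain ⟨μ, hμ⟩ :=
    ((Module.End.finite_spectrum (L ∘ₗ g)).insert 0).infinite_compl.nonempty
  obtain ⟨hμ0, hμ⟩ : μ ≠ 0 ∧ IsUnit (algebraMap K (Module.End K M) μ - L ∘ₗ g) := by
    simpa [spectrum.mem_iff] using hμ
  refine ⟨-μ⁻¹, neg_ne_zero.2 (inv_ne_zero hμ0), ?_⟩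
  have hcomp : L ∘ₗ (f + -μ⁻¹ • g) = μ⁻¹ • (algebraMap K (Module.End K M) μ - L ∘ₗ g) := by
    rw [LinearMap.comp_add, LinearMap.comp_smul, hL, smul_sub, Algebra.algebraMap_eq_smul_one,
      inv_smul_smul₀ hμ0, neg_smul, ← sub_eq_add_neg]
    rfl
  have hinj : Function.Injective (L ∘ₗ (f + -μ⁻¹ • g)) := by
    rw [hcomp]
    exact (smul_right_injective M (inv_ne_zero hμ0)).comp
      ((Module.End.isUnit_iff _).1 hμ).injective
  exact Function.Injective.of_comp hinj

theorem exists_finrank_range_lt_finrank_range_add_smul [Infinite K] [FiniteDimensional K M]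
    (A B : M →ₗ[K] N) {v : M} (hAv : A v = 0) (hBv : B v ∉ LinearMap.range A) :
    ∃ t : K, Module.finrank K (LinearMap.range A) <
      Module.finrank K (LinearMap.range (A + t • B)) := by
  obtain ⟨W, hW⟩ := (LinearMap.ker A).exists_isCompl
  -- After rescaling `v` by `t⁻¹`, `A + t • B` restricts to `f + t • g` on `W ⊕ K v`.
  let f : W × K →ₗ[K] N := (A.domRestrict W).coprod (LinearMap.toSpanSingleton K N (B v))
  let g : W × K →ₗ[K] N := (B.domRestrict W).coprod 0
  have hf : Function.Injective f := by
    have hBv0 : B v ≠ 0 := fun h => hBv (h ▸ zero_mem _)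
    have hdisj : Disjoint (LinearMap.range (A.domRestrict W))
        (LinearMap.range (LinearMap.toSpanSingleton K N (B v))) := by
      rw [LinearMap.range_toSpanSingleton, disjoint_span_singleton' hBv0]
      exact fun h => hBv (LinearMap.range_domRestrict_le_range A W h)
    rw [← LinearMap.ker_eq_bot, LinearMap.ker_coprod_of_disjoint_range _ _ hdisj,
      LinearMap.ker_toSpanSingleton K hBv0,
      LinearMap.ker_eq_bot.2 (LinearMap.injective_domRestrict_iff.2 hW.disjoint.symm),
      prod_bot]
  obtain ⟨t, ht, hinj⟩ := exists_ne_zero_injective_add_smul hf g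
  have hrange : LinearMap.range (f + t • g) ≤ LinearMap.range (A + t • B) := by
    rintro _ ⟨⟨w, c⟩, rfl⟩
    refine ⟨w + (c * t⁻¹) • v, ?_⟩
    have hc : (c * t⁻¹) • t • B v = c • B v := by
      rw [smul_smul, inv_mul_cancel_right₀ ht]
    simp only [map_add, map_smul, LinearMap.add_apply, LinearMap.smul_apply, hAv,
      zero_add, hc, LinearMap.coprod_apply, LinearMap.domRestrict_apply,
      LinearMap.toSpanSingleton_apply, LinearMap.zero_apply, add_zero, f, g]
    abel
  refine ⟨t, ?_⟩
  have hdim := finrank_add_eq_of_isCompl hW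
  have hrank := A.finrank_range_add_finrank_ker
  have hle := finrank_mono hrange
  rw [LinearMap.finrank_range_of_inj hinj, Module.finrank_prod, Module.finrank_self] at hle
  omega

theorem exists_injective_of_surjective_flip_of_infinite [Infinite K] [FiniteDimensional K M]
    (S : X →ₗ[K] M →ₗ[K] N) (hS : ∀ v ≠ 0, Function.Surjective (S.flip v))
    (hMN : Module.finrank K M ≤ Module.finrank K N) : ∃ x, Function.Injective (S x) := by
  obtain ⟨x, -, hx⟩ := exists_minimalFor_of_wellFoundedLT (fun _ => True)
    (fun x => Module.finrank K (LinearMap.ker (S x))) ⟨0, trivial⟩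
  refine ⟨x, (injective_iff_map_eq_zero _).2 fun v hv => ?_⟩
  by_contra hv0
  have hrank (y : X) := (S y).finrank_range_add_finrank_ker
  have hker : 0 < Module.finrank K (LinearMap.ker (S x)) :=
    Module.finrank_pos_iff_exists_ne_zero.2 ⟨⟨v, hv⟩, fun h => hv0 (congrArg Subtype.val h)⟩
  obtain ⟨w, hw⟩ : ∃ w, w ∉ LinearMap.range (S x) := by
    by_contra! h
    have := hrank x
    rw [eq_top_iff'.2 h, finrank_top] at this
    omega
  obtain ⟨y, rfl⟩ := hS v hv0 w
  obtain ⟨t, ht⟩ := exists_finrank_range_lt_finrank_range_add_smul (S x) (S y) hv hw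
  rw [← map_smul, ← map_add] at ht
  have hmin := hx (j := x + t • y) trivial
  have h₁ := hrank x
  have h₂ := hrank (x + t • y)
  simp only at hmin
  omega

theorem exists_injective_of_surjective_flip_of_finite [Finite K] [FiniteDimensional K M]
    [FiniteDimensional K N] [FiniteDimensional K X] (S : X →ₗ[K] M →ₗ[K] N)
    (hS : ∀ v ≠ 0, Function.Surjective (S.flip v))
    (hMN : Module.finrank K M ≤ Module.finrank K N) : ∃ x, Function.Injective (S x) := by
  have := Module.finite_of_finite K (M := M)
  have := Module.finite_of_finite K (M := X)
  have := Fintype.ofFinite {v : M // v ≠ 0}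
  by_contra! h
  have hsurj : Function.Surjective
      fun z : Σ v : {v : M // v ≠ 0}, LinearMap.ker (S.flip v) => (z.2 : X) := by
    intro x
    obtain ⟨v, hv, hv0⟩ : ∃ v, S x v = 0 ∧ v ≠ 0 := by
      simpa [injective_iff_map_eq_zero] using h x
    exact ⟨⟨⟨v, hv0⟩, ⟨x, hv⟩⟩, rfl⟩
  have hker (v : {v : M // v ≠ 0}) :
      Nat.card (LinearMap.ker (S.flip v)) * Nat.card N = Nat.card X := by
    rw [Submodule.card_eq_card_quotient_mul_card (LinearMap.ker (S.flip v)), mul_comm,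
      Nat.card_congr ((S.flip v).quotKerEquivOfSurjective (hS v v.2)).toEquiv, mul_comm]
  have hM : Nat.card {v : M // v ≠ 0} < Nat.card N :=
    calc
      Nat.card {v : M // v ≠ 0} < Nat.card M := Finite.card_subtype_lt (x := 0) (by simp)
      _ ≤ Nat.card N := by
        rw [Module.natCard_eq_pow_finrank (K := K), Module.natCard_eq_pow_finrank (K := K) (V := N)]
        exact Nat.pow_le_pow_right Nat.card_pos hMN
  have hle : Nat.card X * Nat.card N ≤ Nat.card {v : M // v ≠ 0} * Nat.card X :=
    calc
      Nat.card X * Nat.card N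
          ≤ (∑ v : {v : M // v ≠ 0}, Nat.card (LinearMap.ker (S.flip v))) * Nat.card N := by
        rw [← Nat.card_sigma]
        exact Nat.mul_le_mul_right _ (Nat.card_le_card_of_surjective _ hsurj)
      _ = Nat.card {v : M // v ≠ 0} * Nat.card X := by
        simp only [Finset.sum_mul, hker, Finset.sum_const, Finset.card_univ, smul_eq_mul,
          Nat.card_eq_fintype_card]
  rw [mul_comm] at hle
  exact hM.not_ge (Nat.le_of_mul_le_mul_right hle Nat.card_pos)

theorem exists_injective_of_surjective_flip [FiniteDimensional K M] [FiniteDimensional K N]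
    [FiniteDimensional K X] (S : X →ₗ[K] M →ₗ[K] N) (hS : ∀ v ≠ 0, Function.Surjective (S.flip v))
    (hMN : Module.finrank K M ≤ Module.finrank K N) : ∃ x, Function.Injective (S x) := by
  cases finite_or_infinite K
  · exact exists_injective_of_surjective_flip_of_finite S hS hMN
  · exact exists_injective_of_surjective_flip_of_infinite S hS hMN

theorem exists_forall_smul_mem_imp_eq_zero {L : Type*} [Field L] [Algebra K L] [Module L X]
    [IsScalarTower K L X] [FiniteDimensional K L] [FiniteDimensional K X] (Y : Submodule K X)
    (hY : Module.finrank K Y + Module.finrank K L ≤ Module.finrank K X) :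
    ∃ x : X, ∀ a : L, a • x ∈ Y → a = 0 := by
  let S : X →ₗ[K] L →ₗ[K] X ⧸ Y := (Algebra.lsmul K K X).toLinearMap.flip.compr₂ Y.mkQ
  have hS (a : L) (ha : a ≠ 0) : Function.Surjective (S.flip a) := by
    intro z
    obtain ⟨x, rfl⟩ := Y.mkQ_surjective z
    exact ⟨a⁻¹ • x, congrArg Y.mkQ (smul_inv_smul₀ ha x)⟩
  have hdim : Module.finrank K L ≤ Module.finrank K (X ⧸ Y) := by
    have := Y.finrank_quotient_add_finrank
    omega
  obtain ⟨x, hx⟩ := exists_injective_of_surjective_flip S hS hdim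
  exact ⟨x, fun a ha => (injective_iff_map_eq_zero _).1 hx a ((Quotient.mk_eq_zero Y).2 ha)⟩

end LinearAlgebra

section RankSupport

variable {F E : Type*} [Field F] [Field E] [Algebra F E] {n : ℕ}

theorem comp_fIncl (l : Module.Dual F E) (u : Fin n → F) : l ∘ fIncl F E n u = l 1 • u := by
  ext i
  simp [fIncl, Algebra.algebraMap_eq_smul_one, mul_comm]

theorem sum_smul_fIncl_coord_comp {ι : Type*} [Fintype ι] (b : Module.Basis ι F E)
    (x : Fin n → E) : ∑ k, b k • fIncl F E n (b.coord k ∘ x) = x := by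
  ext i
  conv_rhs => rw [← b.sum_repr (x i)]
  simp [fIncl, Algebra.smul_def, mul_comm]

theorem mem_span_fIncl_iff [FiniteDimensional F E] {U : Submodule F (Fin n → F)}
    {x : Fin n → E} :
    x ∈ span E (fIncl F E n '' U) ↔ ∀ l : Module.Dual F E, l ∘ x ∈ U := by
  constructor
  · intro hx
    induction hx using span_induction with
    | mem x hx =>
      obtain ⟨u, hu, rfl⟩ := hx
      exact fun l => comp_fIncl l u ▸ U.smul_mem _ hu
    | zero =>
      intro l
      change l.compLeft (Fin n) 0 ∈ U
      exact map_zero (l.compLeft (Fin n)) ▸ U.zero_mem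
    | add x y _ _ hx hy =>
      intro l
      change l.compLeft (Fin n) (x + y) ∈ U
      exact map_add (l.compLeft (Fin n)) x y ▸ U.add_mem (hx l) (hy l)
    | smul a _ _ hx => exact fun l => hx (l ∘ₗ LinearMap.mulLeft F a)
  · intro h
    let b := Module.finBasis F E
    rw [← sum_smul_fIncl_coord_comp b x]
    exact sum_mem fun k _ => smul_mem _ _ (subset_span ⟨_, h (b.coord k), rfl⟩)

theorem rankSupport_le_iff_forall_comp_mem [FiniteDimensional F E] {A : Set (Fin n → E)}
    {U : Submodule F (Fin n → F)} :
    rankSupport F E n A ≤ U ↔ ∀ x ∈ A, ∀ l : Module.Dual F E, l ∘ x ∈ U := by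
  constructor
  · intro h x hx l
    exact h (mem_sInf.2 fun W hW => mem_span_fIncl_iff.1 (hW hx) l)
  · exact fun h => sInf_le fun x hx => mem_span_fIncl_iff.2 (h x hx)

theorem rankSupport_le_iff_subset_span [FiniteDimensional F E] {A : Set (Fin n → E)}
    {U : Submodule F (Fin n → F)} :
    rankSupport F E n A ≤ U ↔ A ⊆ span E (fIncl F E n '' U) := by
  simp only [rankSupport_le_iff_forall_comp_mem, Set.subset_def, SetLike.mem_coe,
    mem_span_fIncl_iff]

theorem rankSupport_mono [FiniteDimensional F E] {A B : Set (Fin n → E)} (h : A ⊆ B) :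
    rankSupport F E n A ≤ rankSupport F E n B :=
  rankSupport_le_iff_subset_span.2 (h.trans (rankSupport_le_iff_subset_span.1 le_rfl))

theorem rankSupport_sup [FiniteDimensional F E] (B D : Submodule E (Fin n → E)) :
    rankSupport F E n (B ⊔ D : Submodule E (Fin n → E)) =
      rankSupport F E n B ⊔ rankSupport F E n D :=
  eq_of_forall_ge_iff fun U => by
    simp only [sup_le_iff, rankSupport_le_iff_subset_span, SetLike.coe_subset_coe]

theorem wt_le_finrank_mul_finrank [FiniteDimensional F E] (D : Submodule E (Fin n → E)) :
    wt F E n D ≤ Module.finrank F E * Module.finrank E D := by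
  let b := Module.finBasis F E
  let d := Module.finBasis E D
  let g : Fin (Module.finrank F E) × Fin (Module.finrank E D) → Fin n → F :=
    fun p => b.coord p.1 ∘ (d p.2 : Fin n → E)
  have hd (j) : (d j : Fin n → E) ∈ span E (fIncl F E n '' span F (Set.range g)) := by
    rw [← sum_smul_fIncl_coord_comp b (d j : Fin n → E)]
    exact sum_mem fun k _ => smul_mem _ _ (subset_span ⟨_, subset_span ⟨(k, j), rfl⟩, rfl⟩)
  have hD : rankSupport F E n D ≤ span F (Set.range g) := by
    refine rankSupport_le_iff_subset_span.2 fun x hx => ?_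
    have hx' : x = ∑ j, d.repr ⟨x, hx⟩ j • (d j : Fin n → E) := by
      simpa only [map_sum, map_smul, subtype_apply] using
        (congrArg D.subtype (d.sum_repr ⟨x, hx⟩)).symm
    rw [hx']
    exact sum_mem fun j _ => smul_mem _ _ (hd j)
  calc
    wt F E n D ≤ Module.finrank F (span F (Set.range g)) := finrank_mono hD
    _ ≤ Fintype.card (Fin (Module.finrank F E) × Fin (Module.finrank E D)) :=
      finrank_range_le_card g
    _ = Module.finrank F E * Module.finrank E D := by simp

variable (F) in
/-- Scalar extension of functionals from `F^n` to `E^n`, followed by restriction to the code `D`.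
Its kernel is the annihilator of the rank support of `D`. Functionals are encoded by their
coefficient vectors, so that the extension is `fIncl`. -/
noncomputable def dualExtension (D : Submodule E (Fin n → E)) :
    Module.Dual F (Fin n → F) →ₗ[F] Module.Dual E D :=
  (D.dualRestrict ∘ₗ (dotProductEquiv E (Fin n)).toLinearMap).restrictScalars F ∘ₗ
    fIncl F E n ∘ₗ (dotProductEquiv F (Fin n)).symm.toLinearMap

theorem dualExtension_apply (D : Submodule E (Fin n → E)) (f : Module.Dual F (Fin n → F))
    (x : D) : dualExtension F D f x = ∑ i, f (Pi.single i 1) • (x : Fin n → E) i := by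
  simp [dualExtension, fIncl, dotProduct, Algebra.smul_def]

theorem apply_dualExtension (D : Submodule E (Fin n → E)) (l : Module.Dual F E)
    (f : Module.Dual F (Fin n → F)) (x : D) :
    l (dualExtension F D f x) = f (l ∘ (x : Fin n → E)) := by
  calc
    l (dualExtension F D f x)
      = dotProductEquiv F (Fin n) ((dotProductEquiv F (Fin n)).symm f) (l ∘ (x : Fin n → E)) := by
        simp only [dualExtension_apply, map_sum, map_smul, smul_eq_mul, dotProductEquiv_apply_apply,
          dotProduct, dotProductEquiv_symm_apply, Function.comp_apply, LinearMap.single_apply]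
    _ = f (l ∘ (x : Fin n → E)) := by rw [LinearEquiv.apply_symm_apply]

theorem ker_dualExtension [FiniteDimensional F E] (D : Submodule E (Fin n → E)) :
    LinearMap.ker (dualExtension F D) = (rankSupport F E n D).dualAnnihilator := by
  ext f
  calc
    f ∈ LinearMap.ker (dualExtension F D)
      ↔ ∀ x : D, ∀ l : Module.Dual F E, l (dualExtension F D f x) = 0 := by
        simp only [LinearMap.mem_ker, LinearMap.ext_iff, LinearMap.zero_apply,
          Module.forall_dual_apply_eq_zero_iff]
    _ ↔ rankSupport F E n D ≤ LinearMap.ker f := by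
        simp only [rankSupport_le_iff_forall_comp_mem, apply_dualExtension, Subtype.forall,
          SetLike.mem_coe, LinearMap.mem_ker]
    _ ↔ f ∈ (rankSupport F E n D).dualAnnihilator := (mem_dualAnnihilator f).symm

theorem finrank_range_dualExtension [FiniteDimensional F E] (D : Submodule E (Fin n → E)) :
    Module.finrank F (LinearMap.range (dualExtension F D)) = wt F E n D := by
  have hrank := (dualExtension F D).finrank_range_add_finrank_ker
  have hann := Subspace.finrank_add_finrank_dualAnnihilator_eq (rankSupport F E n D)
  rw [ker_dualExtension, Subspace.dual_finrank_eq] at hrank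
  rw [wt]
  omega

theorem rankSupport_map_ker_eq_iff [FiniteDimensional F E] {D : Submodule E (Fin n → E)}
    (p : Module.Dual E D) :
    rankSupport F E n ((LinearMap.ker p).map D.subtype) = rankSupport F E n D ↔
      ∀ a : E, a • p ∈ LinearMap.range (dualExtension F D) → a • p = 0 := by
  have hsub : rankSupport F E n ((LinearMap.ker p).map D.subtype) ≤ rankSupport F E n D :=
    rankSupport_mono (map_subtype_le D _)
  have hker (f) : dualExtension F ((LinearMap.ker p).map D.subtype) f = 0 ↔
      LinearMap.ker p ≤ LinearMap.ker (dualExtension F D f) := by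
    simp [LinearMap.ext_iff, dualExtension_apply, SetLike.le_def]
  rw [le_antisymm_iff, and_iff_right hsub, ← Subspace.dualAnnihilator_le_dualAnnihilator_iff,
    ← ker_dualExtension, ← ker_dualExtension]
  simp only [SetLike.le_def (A := Submodule F _), LinearMap.mem_ker, hker,
    ker_le_ker_iff_exists_smul_eq]
  constructor
  · rintro h a ⟨f, hf⟩
    rw [← hf]
    exact h ⟨a, hf.symm⟩
  · rintro h f ⟨a, ha⟩
    rw [← ha]
    exact h a ⟨f, ha.symm⟩

theorem exists_dualExtension_ne_zero {D : Submodule E (Fin n → E)} (hD : D ≠ ⊥) :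
    ∃ f, dualExtension F D f ≠ 0 := by
  obtain ⟨x, hx, hx0⟩ := exists_mem_ne_zero_of_ne_bot hD
  obtain ⟨i, hi⟩ := Function.ne_iff.1 hx0
  refine ⟨LinearMap.proj i, fun h => hi ?_⟩
  simpa [dualExtension_apply, Pi.single_apply] using LinearMap.congr_fun h ⟨x, hx⟩

theorem exists_ker_rankSupport_ne [FiniteDimensional F E] {D : Submodule E (Fin n → E)}
    (hD : D ≠ ⊥) : ∃ p : Module.Dual E D, p ≠ 0 ∧
      rankSupport F E n ((LinearMap.ker p).map D.subtype) ≠ rankSupport F E n D := by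
  obtain ⟨f, hf⟩ := exists_dualExtension_ne_zero (F := F) hD
  refine ⟨dualExtension F D f, hf, fun h => hf ?_⟩
  simpa using (rankSupport_map_ker_eq_iff _).1 h 1 ⟨f, (one_smul E _).symm⟩

theorem exists_ker_rankSupport_eq [FiniteDimensional F E] {D : Submodule E (Fin n → E)}
    (hD : wt F E n D + Module.finrank F E ≤ Module.finrank F E * Module.finrank E D) :
    ∃ p : Module.Dual E D, p ≠ 0 ∧
      rankSupport F E n ((LinearMap.ker p).map D.subtype) = rankSupport F E n D := by
  have : FiniteDimensional F (Module.Dual E D) := Module.Finite.trans E _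
  have hdual : Module.finrank F (Module.Dual E D) = Module.finrank F E * Module.finrank E D := by
    rw [← Module.finrank_mul_finrank F E, Subspace.dual_finrank_eq]
  rw [← finrank_range_dualExtension, ← hdual] at hD
  obtain ⟨p, hp⟩ := exists_forall_smul_mem_imp_eq_zero (L := E) _ hD
  refine ⟨p, ?_, (rankSupport_map_ker_eq_iff p).2 fun a ha => by rw [hp a ha, zero_smul]⟩
  rintro rfl
  exact one_ne_zero (hp 1 (by simp))

theorem grw_le_wt {C D : Submodule E (Fin n → E)} (hDC : D ≤ C) :
    grw F E n C (Module.finrank E D) ≤ wt F E n D :=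
  Nat.sInf_le ⟨D, hDC, rfl, rfl⟩

theorem exists_wt_eq_grw (C : Submodule E (Fin n → E)) {r : ℕ} (hr : r ≤ Module.finrank E C) :
    ∃ D ≤ C, Module.finrank E D = r ∧ wt F E n D = grw F E n C r := by
  obtain ⟨D, hDC, hD⟩ := exists_le_finrank_eq C hr
  exact Nat.sInf_mem (s := {w | ∃ D ≤ C, Module.finrank E D = r ∧ wt F E n D = w})
    ⟨_, D, hDC, hD, rfl⟩

theorem IsRMinimal.lt_grw [FiniteDimensional F E] {C : Submodule E (Fin n → E)} {r : ℕ}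
    (hC : IsRMinimal F E n C r) (hr : r + 1 ≤ Module.finrank E C) :
    Module.finrank F E * r < grw F E n C (r + 1) := by
  by_contra! hle
  obtain ⟨D, hDC, hD, hwt⟩ := exists_wt_eq_grw (F := F) C hr
  have hDbot : D ≠ ⊥ := by
    rintro rfl
    simp at hD
  obtain ⟨p, hp, hfull⟩ := exists_ker_rankSupport_eq (F := F) (D := D) (by
    rw [hD, mul_add_one]
    omega)
  obtain ⟨q, hq, hsmall⟩ := exists_ker_rankSupport_ne (F := F) hDbot
  have hdim {s : Module.Dual E D} (hs : s ≠ 0) :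
      Module.finrank E ((LinearMap.ker s).map D.subtype) = r :=
    Nat.succ_injective ((finrank_map_subtype_ker_add_one hs).trans hD)
  have hsub (s : Module.Dual E D) : (LinearMap.ker s).map D.subtype ≤ D := map_subtype_le D _
  have hle : rankSupport F E n ((LinearMap.ker q).map D.subtype) ≤
      rankSupport F E n ((LinearMap.ker p).map D.subtype) :=
    hfull ▸ rankSupport_mono (hsub q)
  have heq : rankSupport F E n ((LinearMap.ker q).map D.subtype) =
      rankSupport F E n ((LinearMap.ker p).map D.subtype) :=
    hC _ ((hsub p).trans hDC) (hdim hp) _ ((hsub q).trans hDC) ((hdim hq).trans (hdim hp).symm) hle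
  exact hsmall (heq.trans hfull)

theorem isRMinimal_of_lt_grw [FiniteDimensional F E] {C : Submodule E (Fin n → E)} {r : ℕ}
    (hC : Module.finrank F E * r < grw F E n C (r + 1)) : IsRMinimal F E n C r := by
  rintro D hDC rfl B hBC hBD hsupp
  by_contra hne
  have hnle : ¬B ≤ D := fun h => hne (by rw [eq_of_le_of_finrank_eq h hBD])
  obtain ⟨G, hG, hGdim⟩ := exists_le_finrank_eq (D ⊔ B)
    (finrank_lt_finrank_of_lt (left_lt_sup.2 hnle))
  have hGD : rankSupport F E n G ≤ rankSupport F E n D := by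
    calc
      rankSupport F E n G ≤ rankSupport F E n (D ⊔ B : Submodule E (Fin n → E)) :=
        rankSupport_mono hG
      _ = rankSupport F E n D := by rw [rankSupport_sup, sup_eq_left.2 hsupp]
  refine hC.not_ge ?_
  calc
    grw F E n C (Module.finrank E D + 1) ≤ wt F E n G := by
      rw [← Nat.succ_eq_add_one, ← hGdim]
      exact grw_le_wt (hG.trans (sup_le hDC hBC))
    _ ≤ wt F E n D := finrank_mono hGD
    _ ≤ Module.finrank F E * Module.finrank E D := wt_le_finrank_mul_finrank D

end RankSupport

/-- Theorem 4.4: an `[n,k]` code `C` is `r`-minimal (for `r ∈ {0, …, k-1}`) iff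
`d_{r+1}(C) ≥ mr + 1`. -/
theorem statement13 (F E : Type*) [Field F] [Field E] [Algebra F E]
    [FiniteDimensional F E] (m : ℕ) (hm : Module.finrank F E = m)
    (n k : ℕ) (hk : 1 ≤ k) (hkn : k ≤ n)
    (C : Submodule E (Fin n → E)) (hC : Module.finrank E C = k)
    (r : ℕ) (hr : r + 1 ≤ k) :
    IsRMinimal F E n C r ↔ m * r + 1 ≤ grw F E n C (r + 1) := by
  subst hm hC
  exact ⟨fun hmin => hmin.lt_grw hr, isRMinimal_of_lt_grw⟩
end

section
/- Fix (λ,s,k) ∈ ℕ³ with k ≥ s ≥ λ+1. Let X be a k-dimensional E-vector space and let J be an F-subspace of X that is (k−λ, 2k−λ−s)-evasive in X. Then: (1) if m = 2, then dim_F(J) ≤ 2k−s; (2) if m = 3, then dim_F(J) ≤ 2k−s+⌈λ/2⌉; (3) if m = 4, then dim_F(J) ≤ 2k−s+λ+1. -/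
open Submodule Pointwise

/-- `J` is `(h, r)`-evasive in the `E`-vector space `X`. -/
def IsEvasive (F E : Type*) {X : Type*} [Field F] [Field E] [Algebra F E]
    [AddCommGroup X] [Module E X] [Module F X] [IsScalarTower F E X]
    (J : Submodule F X) (h : ℕ) (r : ℤ) : Prop :=
  Submodule.span E (J : Set X) = ⊤ ∧
    ∀ M : Submodule E X, Module.finrank E M = h →
      (Module.finrank F ↥(J ⊓ M.restrictScalars F) : ℤ) ≤ r

/-!
Let `m = dim_F E`, `k = dim_E X`. Two elements `1, α` of `E` are `F`-independent, so if
`2 dim_F J > dim_F Y`, then `J` and `α J` share a nonzero vector and some `E`-line of `Y` meets `J`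
in `F`-dimension at least `2`. Applying this to the image of `J` in `Y = X ⧸ M`, starting from
`M = 0` and pulling the line back to `X`, gives `M` of any `E`-dimension `h` with
`dim_F (J ∩ M) ≥ 2 h`. The critical case of the step from `dim_E M = j` is `dim_F (J ∩ M) = 2 j`;
the condition on the image of `J` then reads `m (k - j) < 2 (dim_F J - 2 j)`. A `J` too small for
this is first enlarged, which raises `dim_F (J ∩ M)` by at most the number of dimensions added.
-/

section FiniteDimensional

open Module

variable {K V W : Type*} [DivisionRing K] [AddCommGroup V] [Module K V] [FiniteDimensional K V]

theorem finrank_inf_comap [AddCommGroup W] [Module K W] (f : V →ₗ[K] W) (U : Submodule K V)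
    (N : Submodule K W) :
    finrank K ↥(U ⊓ N.comap f) =
      finrank K ↥(U ⊓ LinearMap.ker f) + finrank K ↥(U.map f ⊓ N) := by
  have hker : (LinearMap.ker (f.domRestrict (U ⊓ N.comap f))).map (U ⊓ N.comap f).subtype =
      U ⊓ LinearMap.ker f := by
    rw [LinearMap.ker_domRestrict, Submodule.map_comap_subtype, inf_assoc,
      inf_eq_right.2 (LinearMap.ker_le_comap f)]
  have hrange : LinearMap.range (f.domRestrict (U ⊓ N.comap f)) = U.map f ⊓ N := by
    rw [LinearMap.range_domRestrict, map_inf_eq_map_inf_comap]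
  rw [← hker, finrank_map_subtype_eq, ← hrange, add_comm, LinearMap.finrank_range_add_finrank_ker]

theorem finrank_comap_mkQ (U : Submodule K V) (N : Submodule K (V ⧸ U)) :
    finrank K ↥(N.comap U.mkQ) = finrank K U + finrank K N := by
  have h := finrank_inf_comap U.mkQ ⊤ N
  rwa [top_inf_eq, top_inf_eq, ker_mkQ, Submodule.map_top, range_mkQ, top_inf_eq] at h

theorem exists_le_finrank_eq_s16 {U : Submodule K V} {n : ℕ} (hUn : finrank K U ≤ n)
    (hn : n ≤ finrank K V) : ∃ U' : Submodule K V, U ≤ U' ∧ finrank K U' = n := by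
  obtain ⟨s, hs, hli⟩ := exists_finset_linearIndependent_of_le_finrank (R := K) (M := V ⧸ U)
    (n := n - finrank K U) (by rw [finrank_quotient]; omega)
  refine ⟨(span K (s : Set (V ⧸ U))).comap U.mkQ, le_comap_mkQ _ _, ?_⟩
  rw [finrank_comap_mkQ, finrank_span_finset_eq_card hli, hs, Nat.add_sub_cancel' hUn]

theorem finrank_inf_add_finrank_le_of_le {U U' : Submodule K V} (hU : U ≤ U')
    (N : Submodule K V) :
    finrank K ↥(U' ⊓ N) + finrank K U ≤ finrank K ↥(U ⊓ N) + finrank K U' :=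
  calc finrank K ↥(U' ⊓ N) + finrank K U
      = finrank K ↥(U ⊔ U' ⊓ N) + finrank K ↥(U ⊓ N) := by
        rw [add_comm, ← finrank_sup_add_finrank_inf_eq, ← inf_assoc, inf_eq_left.2 hU]
    _ ≤ finrank K U' + finrank K ↥(U ⊓ N) := by
        gcongr
        exact finrank_mono (sup_le hU inf_le_left)
    _ = finrank K ↥(U ⊓ N) + finrank K U' := add_comm _ _

end FiniteDimensional

section RestrictScalars

open Module

variable {F E X : Type*} [Field F] [DivisionRing E] [Algebra F E]
  [AddCommGroup X] [Module E X] [Module F X] [IsScalarTower F E X]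

theorem two_le_finrank_inf_span_singleton [FiniteDimensional F X] {J : Submodule F X} {α : E}
    (hα : LinearIndependent F ![1, α]) {x : X} (hx : x ≠ 0) (hxJ : x ∈ J) (hαxJ : α • x ∈ J) :
    2 ≤ finrank F ↥(J ⊓ (span E {x}).restrictScalars F) := by
  have hli : LinearIndependent F ![x, α • x] := by
    let g : E →ₗ[F] X := (LinearMap.toSpanSingleton E X x).restrictScalars F
    have hg : LinearMap.ker g = ⊥ := LinearMap.ker_eq_bot.2 (smul_left_injective E hx)
    have hgα : g ∘ ![1, α] = ![x, α • x] := by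
      ext i
      fin_cases i <;> simp [g]
    exact hgα ▸ hα.map' g hg
  have hle : span F (Set.range ![x, α • x]) ≤ J ⊓ (span E {x}).restrictScalars F := by
    have hxE : x ∈ span E {x} := mem_span_singleton_self x
    rw [span_le, Matrix.range_cons_cons_empty, Set.pair_subset_iff]
    exact ⟨⟨hxJ, hxE⟩, hαxJ, smul_mem _ α hxE⟩
  simpa only [finrank_span_eq_card hli, Fintype.card_fin] using finrank_mono hle

theorem exists_two_le_finrank_inf_span_singleton [FiniteDimensional F X] (hE : 1 < finrank F E)
    {J : Submodule F X} (hJ : finrank F X < 2 * finrank F J) :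
    ∃ x : X, x ≠ 0 ∧ 2 ≤ finrank F ↥(J ⊓ (span E {x}).restrictScalars F) := by
  obtain ⟨α, hα⟩ := exists_linearIndependent_pair_of_one_lt_finrank hE (one_ne_zero (α := E))
  have hα0 : α ≠ 0 := hα.ne_zero 1
  let f : X →ₗ[F] X := Algebra.lsmul F F X α
  have hf : Function.Injective f := smul_right_injective X hα0
  have hmeet : ¬Disjoint (J.map f) J := fun hdisj => by
    have := finrank_add_finrank_le_of_disjoint hdisj
    rw [← (J.equivMapOfInjective f hf).finrank_eq] at this
    omega
  obtain ⟨_, ⟨⟨x, hxJ, rfl⟩, hαxJ⟩, hαx⟩ := exists_mem_ne_zero_of_ne_bot (mt disjoint_iff.2 hmeet)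
  have hx : x ≠ 0 := fun h => hαx (by rw [h, map_zero])
  exact ⟨x, hx, two_le_finrank_inf_span_singleton hα hx hxJ hαxJ⟩

theorem exists_two_le_finrank_inf_span_singleton_add [FiniteDimensional F X] [Nontrivial X]
    (hE : 1 < finrank F E) {J : Submodule F X} {e : ℕ} (hJ : finrank F X < 2 * (finrank F J + e)) :
    ∃ x : X, x ≠ 0 ∧ 2 ≤ finrank F ↥(J ⊓ (span E {x}).restrictScalars F) + e := by
  obtain rfl | rfl | he : e = 0 ∨ e = 1 ∨ 2 ≤ e := by omega
  · exact exists_two_le_finrank_inf_span_singleton hE hJ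
  · have hX : finrank F E ≤ finrank F X := by
      obtain ⟨x, hx⟩ := exists_ne (0 : X)
      exact LinearMap.finrank_le_finrank_of_injective
        (f := (LinearMap.toSpanSingleton E X x).restrictScalars F) (smul_left_injective E hx)
    have hJbot : J ≠ ⊥ := by
      rintro rfl
      rw [finrank_bot] at hJ
      omega
    obtain ⟨x, hxJ, hx⟩ := exists_mem_ne_zero_of_ne_bot hJbot
    refine ⟨x, hx, Nat.succ_le_succ (one_le_finrank_iff.2 ?_)⟩
    exact (Submodule.ne_bot_iff _).2 ⟨x, ⟨hxJ, mem_span_singleton_self x⟩, hx⟩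
  · obtain ⟨x, hx⟩ := exists_ne (0 : X)
    exact ⟨x, hx, le_add_left he⟩

theorem finrank_inf_restrictScalars_comap_mkQ [FiniteDimensional F X] (J : Submodule F X)
    (M : Submodule E X) (N : Submodule E (X ⧸ M)) :
    finrank F ↥(J ⊓ (N.comap M.mkQ).restrictScalars F) =
      finrank F ↥(J ⊓ M.restrictScalars F) +
        finrank F ↥(J.map (M.mkQ.restrictScalars F) ⊓ N.restrictScalars F) := by
  have hker : LinearMap.ker (M.mkQ.restrictScalars F) = M.restrictScalars F := by
    rw [LinearMap.ker_restrictScalars, ker_mkQ]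
  exact hker ▸ finrank_inf_comap (M.mkQ.restrictScalars F) J (N.restrictScalars F)

variable [FiniteDimensional F E] [FiniteDimensional E X]

theorem exists_finrank_eq_add_one_and_two_mul_le_finrank_inf (hE : 1 < finrank F E)
    {J : Submodule F X} {M : Submodule E X} (hM : M ≠ ⊤)
    (hJ : finrank F (X ⧸ M) + 4 * finrank E M < 2 * finrank F J)
    (hJM : 2 * finrank E M ≤ finrank F ↥(J ⊓ M.restrictScalars F)) :
    ∃ M' : Submodule E X, finrank E M' = finrank E M + 1 ∧
      2 * finrank E M' ≤ finrank F ↥(J ⊓ M'.restrictScalars F) := by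
  have : FiniteDimensional F X := .trans F E X
  have : Nontrivial (X ⧸ M) := Quotient.nontrivial_iff.2 hM
  have hmap : finrank F J = finrank F ↥(J ⊓ M.restrictScalars F) +
      finrank F ↥(J.map (M.mkQ.restrictScalars F)) := by
    have h := finrank_inf_restrictScalars_comap_mkQ J M ⊤
    rwa [comap_top, restrictScalars_top, restrictScalars_top, inf_top_eq, inf_top_eq] at h
  obtain ⟨y, hy, hline⟩ := exists_two_le_finrank_inf_span_singleton_add hE
    (J := J.map (M.mkQ.restrictScalars F))
    (e := finrank F ↥(J ⊓ M.restrictScalars F) - 2 * finrank E M) (by omega)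
  have hM' : finrank E ↥((span E {y}).comap M.mkQ) = finrank E M + 1 := by
    rw [finrank_comap_mkQ, finrank_span_singleton hy]
  refine ⟨(span E {y}).comap M.mkQ, hM', ?_⟩
  rw [hM', finrank_inf_restrictScalars_comap_mkQ]
  omega

theorem exists_finrank_eq_and_two_mul_le_finrank_inf (hE : 1 < finrank F E) {J : Submodule F X}
    {h : ℕ} (hh : h ≤ finrank E X)
    (hJ : ∀ j < h, finrank F E * (finrank E X - j) + 4 * j < 2 * finrank F J) :
    ∃ M : Submodule E X, finrank E M = h ∧ 2 * h ≤ finrank F ↥(J ⊓ M.restrictScalars F) := by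
  induction h with
  | zero => exact ⟨⊥, finrank_bot E X, Nat.zero_le _⟩
  | succ j ih =>
    obtain ⟨M, rfl, hJM⟩ := ih (by omega) fun i hi => hJ i (by omega)
    have hM : M ≠ ⊤ := by
      rintro rfl
      rw [finrank_top] at hh
      omega
    have hquot : finrank F (X ⧸ M) = finrank F E * (finrank E X - finrank E M) := by
      rw [← finrank_mul_finrank F E (X ⧸ M), finrank_quotient]
    obtain ⟨M', hM', hJM'⟩ := exists_finrank_eq_add_one_and_two_mul_le_finrank_inf hE hM
      (hquot ▸ hJ _ (Nat.lt_succ_self _)) hJM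
    exact ⟨M', hM', hM' ▸ hJM'⟩

theorem finrank_add_two_mul_le_of_forall_finrank_inf_le (hE : 1 < finrank F E) {J : Submodule F X}
    {h r n : ℕ} (hh : h ≤ finrank E X) (hr : r < 2 * h) (hnX : n ≤ finrank F E * finrank E X)
    (hn : ∀ j < h, finrank F E * (finrank E X - j) + 4 * j < 2 * n)
    (hJ : ∀ M : Submodule E X, finrank E M = h → finrank F ↥(J ⊓ M.restrictScalars F) ≤ r) :
    finrank F J + 2 * h ≤ r + n := by
  have : FiniteDimensional F X := .trans F E X
  obtain ⟨J', hJJ', hJ'⟩ := exists_le_finrank_eq_s16 (le_max_left (finrank F J) n)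
    (max_le J.finrank_le (hnX.trans_eq (finrank_mul_finrank F E X)))
  obtain ⟨M, hM, hJ'M⟩ := exists_finrank_eq_and_two_mul_le_finrank_inf hE (J := J') hh
    fun j hj => (hn j hj).trans_le (by omega)
  have hJM := hJ M hM
  have hmod := finrank_inf_add_finrank_le_of_le hJJ' (M.restrictScalars F)
  omega

theorem statement16_general {l r : ℕ} (hr : r + 2 * l < 2 * finrank E X) {J : Submodule F X}
    (hJ : ∀ M : Submodule E X, finrank E M + l = finrank E X →
      finrank F ↥(J ⊓ M.restrictScalars F) ≤ r) :
    (finrank F E = 2 → finrank F J ≤ r + l) ∧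
      (finrank F E = 3 → finrank F J ≤ r + l + (l + 1) / 2) ∧
      (4 ≤ finrank F E →
        finrank F J ≤ r + 2 * l + 1 + (finrank F E - 4) * finrank E X / 2) := by
  have hbound (n : ℕ) (hE : 1 < finrank F E) (hnX : n ≤ finrank F E * finrank E X)
      (hn : ∀ j < finrank E X - l, finrank F E * (finrank E X - j) + 4 * j < 2 * n) :
      finrank F J + 2 * (finrank E X - l) ≤ r + n :=
    finrank_add_two_mul_le_of_forall_finrank_inf_le hE (Nat.sub_le _ _) (by omega) hnX hn
      fun M hM => hJ M (by omega)
  -- The least `n` allowed by `hn`: the critical `j` is the largest one if `finrank F E ≤ 3`,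
  -- and `j = 0` if `4 ≤ finrank F E`.
  refine ⟨fun hE => ?_, fun hE => ?_, fun hE => ?_⟩
  · have := hbound (2 * finrank E X - l) (by omega) (by rw [hE]; omega)
      fun j hj => by rw [hE]; omega
    omega
  · have := hbound (2 * finrank E X - l / 2) (by omega) (by rw [hE]; omega)
      fun j hj => by rw [hE]; omega
    omega
  · obtain ⟨d, hd⟩ := Nat.exists_eq_add_of_le hE
    have := hbound (2 * finrank E X + 1 + d * finrank E X / 2) (by omega)
      (by rw [hd, add_mul]; omega) fun j hj => by
        have := Nat.mul_le_mul_left d (Nat.sub_le (finrank E X) j)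
        rw [hd, add_mul]
        omega
    rw [hd, Nat.add_sub_cancel_left]
    omega

end RestrictScalars

/-- Corollary 5.2: fix `(λ, s, k) ∈ ℕ³` with `k ≥ s ≥ λ + 1`, and let `J` be an
`(k-λ, 2k-λ-s)`-evasive `F`-subspace of a `k`-dimensional `E`-vector space `X`. Then:
(1) if `m = 2`, `dim_F J ≤ 2k - s`; (2) if `m = 3`, `dim_F J ≤ 2k - s + ⌈λ/2⌉`;
(3) if `m = 4`, `dim_F J ≤ 2k - s + λ + 1`. -/
theorem statement16 (F E : Type*) [Field F] [Field E] [Algebra F E]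
    [FiniteDimensional F E] (m : ℕ) (hm : Module.finrank F E = m)
    (l s k : ℕ) (hsk : s ≤ k) (hls : l + 1 ≤ s)
    (X : Type*) [AddCommGroup X] [Module E X] [Module F X] [IsScalarTower F E X]
    [FiniteDimensional E X] (hX : Module.finrank E X = k)
    (J : Submodule F X) (hJ : IsEvasive F E J (k - l) ((2 * k - l - s : ℕ) : ℤ)) :
    (m = 2 → Module.finrank F J ≤ 2 * k - s) ∧
      (m = 3 → Module.finrank F J ≤ 2 * k - s + (l + 1) / 2) ∧
      (m = 4 → Module.finrank F J ≤ 2 * k - s + l + 1) := by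
  have := statement16_general (l := l) (r := 2 * k - l - s) (by omega)
    fun M hM => Int.ofNat_le.1 (hJ.2 M (by omega))
  grind
end
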